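/- Fix d ≥ 1, constants μ > 0, a > 0, γ > 1, and pressure p(s) = a s^γ. Let (ρ₁, u₁) and (ρ₂, u₂) be two smooth, ℤ^d-periodic-in-x solutions on [0,T] × ℝ^d of the compressible Navier–Stokes system ∂t ρ + div(ρu) = 0, ∂t(ρu) + div(ρ u ⊗ u) + ∇p(ρ) − 2μ div(ρ D(u)) = 0, with ρ₁ and ρ₂ bounded below by positive constants. If (ρ₁, u₁)(0,·) = (ρ₂, u₂)(0,·), then (ρ₁, u₁) = (ρ₂, u₂) on all of [0,T] × ℝ^d. -/

import Mathlib

open Real MeasureTheory Set Filter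

noncomputable section

variable {d : ℕ}

/-- `i`-th partial derivative of a scalar function on `ℝᵈ`. -/
def sder (i : Fin d) (f : (Fin d → ℝ) → ℝ) (x : Fin d → ℝ) : ℝ :=
  fderiv ℝ f x (Pi.single i 1)

/-- Jacobian matrix of a vector field on `ℝᵈ`: `(∇u)_{ij} = ∂_j u_i`. -/
def sjac (u : (Fin d → ℝ) → Fin d → ℝ) (x : Fin d → ℝ) : Fin d → Fin d → ℝ :=
  fun i j => sder j (fun y => u y i) x

/-- Symmetric gradient `D(u) = (∇u + (∇u)ᵀ)/2` of a vector field on `ℝᵈ`. -/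
def sD (u : (Fin d → ℝ) → Fin d → ℝ) (x : Fin d → ℝ) : Fin d → Fin d → ℝ :=
  fun i j => (sjac u x i j + sjac u x j i) / 2

/-- Antisymmetric gradient `A(u) = (∇u - (∇u)ᵀ)/2` of a vector field on `ℝᵈ`. -/
def sA (u : (Fin d → ℝ) → Fin d → ℝ) (x : Fin d → ℝ) : Fin d → Fin d → ℝ :=
  fun i j => (sjac u x i j - sjac u x j i) / 2

/-- Time derivative `∂ₜ f` of a scalar function on `ℝ × ℝᵈ`. -/
def tder (f : ℝ × (Fin d → ℝ) → ℝ) (z : ℝ × (Fin d → ℝ)) : ℝ :=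
  fderiv ℝ f z (1, 0)

/-- `i`-th spatial partial derivative `∂ᵢ f` of a scalar function on `ℝ × ℝᵈ`. -/
def xder (i : Fin d) (f : ℝ × (Fin d → ℝ) → ℝ) (z : ℝ × (Fin d → ℝ)) : ℝ :=
  fderiv ℝ f z (0, Pi.single i 1)

/-- Spatial divergence of a (time-dependent) vector field. -/
def xdiv (u : ℝ × (Fin d → ℝ) → Fin d → ℝ) (z : ℝ × (Fin d → ℝ)) : ℝ :=
  ∑ i, xder i (fun y => u y i) z

/-- Spatial Jacobian matrix `(∇u)_{ij} = ∂_j u_i` of a (time-dependent) vector field. -/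
def xjac (u : ℝ × (Fin d → ℝ) → Fin d → ℝ) (z : ℝ × (Fin d → ℝ)) : Fin d → Fin d → ℝ :=
  fun i j => xder j (fun y => u y i) z

/-- Symmetric gradient `D(u) = (∇u + (∇u)ᵀ)/2` of a (time-dependent) vector field. -/
def xD (u : ℝ × (Fin d → ℝ) → Fin d → ℝ) (z : ℝ × (Fin d → ℝ)) : Fin d → Fin d → ℝ :=
  fun i j => (xjac u z i j + xjac u z j i) / 2

/-- Antisymmetric gradient `A(u) = (∇u - (∇u)ᵀ)/2` of a (time-dependent) vector field. -/
def xA (u : ℝ × (Fin d → ℝ) → Fin d → ℝ) (z : ℝ × (Fin d → ℝ)) : Fin d → Fin d → ℝ :=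
  fun i j => (xjac u z i j - xjac u z j i) / 2

/-- Divergence of a matrix field: `(div M)ᵢ = ∑ⱼ ∂ⱼ M_{ij}`. -/
def mdiv (M : ℝ × (Fin d → ℝ) → Fin d → Fin d → ℝ) (z : ℝ × (Fin d → ℝ)) : Fin d → ℝ :=
  fun i => ∑ j, xder j (fun y => M y i j) z

/-- Euclidean inner product on `ℝᵈ`. -/
def dotv (a b : Fin d → ℝ) : ℝ := ∑ i, a i * b i

/-- Frobenius inner product of `d × d` matrices. -/
def frob (M N : Fin d → Fin d → ℝ) : ℝ := ∑ i, ∑ j, M i j * N i j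

/-- The unit box `[0,1]ᵈ`. -/
def box (d : ℕ) : Set (Fin d → ℝ) := Set.univ.pi fun _ => Set.Icc (0 : ℝ) 1

/-- `ℤᵈ`-periodicity in the space variable for scalar functions on `ℝ × ℝᵈ`. -/
def PeriodicX (f : ℝ × (Fin d → ℝ) → ℝ) : Prop :=
  ∀ (t : ℝ) (x : Fin d → ℝ) (k : Fin d → ℤ), f (t, x + fun i => (k i : ℝ)) = f (t, x)

/-- Mass conservation equation `∂ₜ ρ + div (ρ u) = 0` at the point `z`. -/
def MassEq (ρ : ℝ × (Fin d → ℝ) → ℝ) (u : ℝ × (Fin d → ℝ) → Fin d → ℝ)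
    (z : ℝ × (Fin d → ℝ)) : Prop :=
  tder ρ z + xdiv (fun y j => ρ y * u y j) z = 0

/-- Momentum equation `∂ₜ(ρu) + div(ρ u ⊗ u) + ∇(a ρ^γ) - 2 μ div(ρ D(u)) = 0`
at the point `z`. -/
def MomEq (μ a γ : ℝ) (ρ : ℝ × (Fin d → ℝ) → ℝ) (u : ℝ × (Fin d → ℝ) → Fin d → ℝ)
    (z : ℝ × (Fin d → ℝ)) : Prop :=
  ∀ i, tder (fun y => ρ y * u y i) z
      + mdiv (fun y i j => ρ y * u y i * u y j) z i
      + xder i (fun y => a * ρ y ^ γ) z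
      - 2 * μ * mdiv (fun y i j => ρ y * xD u y i j) z i = 0

/-- Compressible Euler momentum equation `∂ₜ(ρu) + div(ρ u ⊗ u) + ∇(a ρ^γ) = 0`
at the point `z`. -/
def EulerMomEq (a γ : ℝ) (ρ : ℝ × (Fin d → ℝ) → ℝ) (u : ℝ × (Fin d → ℝ) → Fin d → ℝ)
    (z : ℝ × (Fin d → ℝ)) : Prop :=
  ∀ i, tder (fun y => ρ y * u y i) z
      + mdiv (fun y i j => ρ y * u y i * u y j) z i
      + xder i (fun y => a * ρ y ^ γ) z = 0

/-!
Relative energy method. With `w = u₁ - u₂` and `r = ρ₁ - ρ₂`, the energy `ρ₁ |w|² / 2 + r² / 2`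
obeys a balance law with dissipation `2 μ ρ₁ |D(w)|²`. Because the viscosity is `μ ρ`, the
difference of the viscous stresses leaves the term `2 μ r D(u₂) : D(w)`; it and the terms in
`div w`, which are at most a constant times `|r| |div w|`, are absorbed by the dissipation through
Young's inequality at the price of a multiple of `r²`. Everything else is quadratic in `(r, w)` with
bounded coefficients, so the integral of the energy over a period cell vanishes by Grönwall.
-/

section Algebra

variable {a b : Fin d → ℝ} {M N : Fin d → Fin d → ℝ} {ε : ℝ}

lemma dotv_self_nonneg (a : Fin d → ℝ) : 0 ≤ dotv a a :=
  Finset.sum_nonneg fun i _ => mul_self_nonneg (a i)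

lemma frob_self_nonneg (M : Fin d → Fin d → ℝ) : 0 ≤ frob M M :=
  Finset.sum_nonneg fun i _ => dotv_self_nonneg (M i)

lemma dotv_self_eq_zero : dotv a a = 0 ↔ a = 0 := by
  simp [dotv, Finset.sum_eq_zero_iff_of_nonneg (fun i _ => mul_self_nonneg (a i)), funext_iff]

lemma dotv_sq_le : dotv a b ^ 2 ≤ dotv a a * dotv b b := by
  simpa only [dotv, sq] using Finset.sum_mul_sq_le_sq_mul_sq Finset.univ a b

lemma abs_mul_dotv_le (hε : 0 < ε) (r : ℝ) :
    |r * dotv a b| ≤ ε * dotv a a + r ^ 2 * dotv b b / (4 * ε) := by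
  have young (x y : ℝ) : |x * y| ≤ ε * (x * x) + y * y / (4 * ε) := by
    have square : ε * (x * x) + y * y / (4 * ε) - |x * y| = (2 * ε * |x| - |y|) ^ 2 / (4 * ε) := by
      rw [abs_mul, ← abs_mul_abs_self x, ← abs_mul_abs_self y]
      field_simp
      ring
    have : 0 ≤ (2 * ε * |x| - |y|) ^ 2 / (4 * ε) := by positivity
    linarith
  calc |r * dotv a b| = |∑ i, a i * (r * b i)| := by
        simp only [dotv, Finset.mul_sum, mul_left_comm]
    _ ≤ ∑ i, |a i * (r * b i)| := Finset.abs_sum_le_sum_abs _ _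
    _ ≤ ∑ i, (ε * (a i * a i) + r * b i * (r * b i) / (4 * ε)) :=
        Finset.sum_le_sum fun i _ => young _ _
    _ = ε * dotv a a + r ^ 2 * dotv b b / (4 * ε) := by
        rw [Finset.sum_add_distrib, ← Finset.mul_sum, ← Finset.sum_div, dotv, dotv]
        simp only [sq, mul_mul_mul_comm r, ← Finset.mul_sum]

lemma abs_mul_frob_le (hε : 0 < ε) (r : ℝ) :
    |r * frob M N| ≤ ε * frob M M + r ^ 2 * frob N N / (4 * ε) :=
  calc |r * frob M N| = |∑ i, r * dotv (M i) (N i)| := congrArg _ (Finset.mul_sum ..)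
    _ ≤ ∑ i, |r * dotv (M i) (N i)| := Finset.abs_sum_le_sum_abs _ _
    _ ≤ ∑ i, (ε * dotv (M i) (M i) + r ^ 2 * dotv (N i) (N i) / (4 * ε)) :=
        Finset.sum_le_sum fun i _ => abs_mul_dotv_le hε r
    _ = ε * frob M M + r ^ 2 * frob N N / (4 * ε) := by
        rw [Finset.sum_add_distrib, ← Finset.mul_sum, ← Finset.sum_div, ← Finset.mul_sum]
        rfl

lemma abs_mul_trace_le (hε : 0 < ε) (r : ℝ) :
    |r * ∑ i, M i i| ≤ ε * frob M M + d * r ^ 2 / (4 * ε) := by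
  have trace : frob M (fun i => Pi.single i 1) = ∑ i, M i i := by
    simp [frob, Pi.single_apply]
  have norm_one : frob (fun i : Fin d => Pi.single i 1) (fun i => Pi.single i 1) = d := by
    simp [frob, Pi.single_apply]
  simpa [trace, norm_one, mul_comm (r ^ 2)] using
    abs_mul_frob_le (M := M) (N := fun i => Pi.single i 1) hε r

lemma abs_quadraticForm_le (M : Fin d → Fin d → ℝ) (v : Fin d → ℝ) :
    |dotv v fun i => dotv (M i) v| ≤ (1 + frob M M) / 2 * dotv v v := by
  have norm_mulVec : (dotv (fun i => dotv (M i) v) fun i => dotv (M i) v) ≤ frob M M * dotv v v :=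
    calc (dotv (fun i => dotv (M i) v) fun i => dotv (M i) v)
        = ∑ i, dotv (M i) v ^ 2 := Finset.sum_congr rfl fun i _ => (sq _).symm
      _ ≤ ∑ i, dotv (M i) (M i) * dotv v v := Finset.sum_le_sum fun i _ => dotv_sq_le
      _ = frob M M * dotv v v := (Finset.sum_mul ..).symm
  have := abs_mul_dotv_le (a := v) (b := fun i => dotv (M i) v) one_half_pos 1
  rw [one_mul, one_pow, one_mul] at this
  linarith

end Algebra

section Calculus

variable {f g : ℝ × (Fin d → ℝ) → ℝ} {u v : ℝ × (Fin d → ℝ) → Fin d → ℝ} {z : ℝ × (Fin d → ℝ)}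

/-- Spatial gradient `∇f` of a scalar function on `ℝ × ℝᵈ`. -/
def xgrad (f : ℝ × (Fin d → ℝ) → ℝ) (z : ℝ × (Fin d → ℝ)) : Fin d → ℝ :=
  fun i => xder i f z

/-- Material derivative `∂ₜ f + u · ∇f` of `f` along the flow of `u`, encoded as the derivative of
`f` in the space-time direction `(1, u)`. -/
def materialDeriv (u : ℝ × (Fin d → ℝ) → Fin d → ℝ) (f : ℝ × (Fin d → ℝ) → ℝ)
    (z : ℝ × (Fin d → ℝ)) : ℝ :=
  fderiv ℝ f z (1, u z)

/-- Acceleration `∂ₜ u + (u · ∇) u` of a fluid particle moving with the velocity field `u`. -/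
def materialAccel (u : ℝ × (Fin d → ℝ) → Fin d → ℝ) (z : ℝ × (Fin d → ℝ)) : Fin d → ℝ :=
  fun i => materialDeriv u (fun y => u y i) z

lemma fderiv_apply_zero_prodMk (f : ℝ × (Fin d → ℝ) → ℝ) (z : ℝ × (Fin d → ℝ)) (e : Fin d → ℝ) :
    fderiv ℝ f z (0, e) = dotv e (xgrad f z) := by
  have := ((fderiv ℝ f z).comp (.inr ℝ ℝ (Fin d → ℝ))).toLinearMap.pi_apply_eq_sum_univ e
  simpa [dotv, xgrad, xder, ← Pi.single_apply, Pi.single_comm] using this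

lemma materialDeriv_eq_tder_add (u : ℝ × (Fin d → ℝ) → Fin d → ℝ) (f : ℝ × (Fin d → ℝ) → ℝ)
    (z : ℝ × (Fin d → ℝ)) : materialDeriv u f z = tder f z + dotv (u z) (xgrad f z) := by
  rw [← fderiv_apply_zero_prodMk, tder, ← map_add]
  simp [materialDeriv]

lemma materialDeriv_eq_add_dotv_sub (u v : ℝ × (Fin d → ℝ) → Fin d → ℝ)
    (f : ℝ × (Fin d → ℝ) → ℝ) (z : ℝ × (Fin d → ℝ)) :
    materialDeriv u f z = materialDeriv v f z + dotv (u z - v z) (xgrad f z) := by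
  rw [← fderiv_apply_zero_prodMk, materialDeriv, materialDeriv, ← map_add]
  simp

lemma materialDeriv_add (hf : DifferentiableAt ℝ f z) (hg : DifferentiableAt ℝ g z) :
    materialDeriv u (fun y => f y + g y) z = materialDeriv u f z + materialDeriv u g z := by
  simp [materialDeriv, fderiv_fun_add hf hg]

lemma materialDeriv_sub (hf : DifferentiableAt ℝ f z) (hg : DifferentiableAt ℝ g z) :
    materialDeriv u (fun y => f y - g y) z = materialDeriv u f z - materialDeriv u g z := by
  simp [materialDeriv, fderiv_fun_sub hf hg]

lemma materialDeriv_mul (hf : DifferentiableAt ℝ f z) (hg : DifferentiableAt ℝ g z) :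
    materialDeriv u (fun y => f y * g y) z
      = materialDeriv u f z * g z + f z * materialDeriv u g z := by
  simp [materialDeriv, fderiv_fun_mul hf hg]
  ring

lemma materialDeriv_sq_div_two (hf : DifferentiableAt ℝ f z) :
    materialDeriv u (fun y => f y ^ 2 / 2) z = f z * materialDeriv u f z := by
  simp [materialDeriv, div_eq_mul_inv, fderiv_mul_const (hf.fun_pow 2), fderiv_fun_pow 2 hf]
  ring

lemma materialDeriv_dotv_self_div_two (hv : DifferentiableAt ℝ v z) :
    materialDeriv u (fun y => dotv (v y) (v y) / 2) z
      = dotv (v z) fun i => materialDeriv u (fun y => v y i) z := by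
  have hvi := differentiableAt_pi.1 hv
  calc materialDeriv u (fun y => dotv (v y) (v y) / 2) z
      = materialDeriv u (fun y => ∑ i, v y i ^ 2 / 2) z := by simp only [dotv, Finset.sum_div, sq]
    _ = ∑ i, materialDeriv u (fun y => v y i ^ 2 / 2) z := by
      simp [materialDeriv, fderiv_fun_sum fun i _ => ((hvi i).fun_pow 2).mul_const _,
        div_eq_mul_inv]
    _ = dotv (v z) fun i => materialDeriv u (fun y => v y i) z :=
      Finset.sum_congr rfl fun i _ => materialDeriv_sq_div_two (hvi i)

lemma xder_sub (hf : DifferentiableAt ℝ f z) (hg : DifferentiableAt ℝ g z) (i : Fin d) :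
    xder i (fun y => f y - g y) z = xder i f z - xder i g z := by
  simp [xder, fderiv_fun_sub hf hg]

lemma xder_mul (hf : DifferentiableAt ℝ f z) (hg : DifferentiableAt ℝ g z) (i : Fin d) :
    xder i (fun y => f y * g y) z = f z * xder i g z + g z * xder i f z := by
  simp [xder, fderiv_fun_mul hf hg]

lemma xdiv_add (hu : DifferentiableAt ℝ u z) (hv : DifferentiableAt ℝ v z) :
    xdiv (fun y j => u y j + v y j) z = xdiv u z + xdiv v z := by
  simp [xdiv, xder, fderiv_fun_add (differentiableAt_pi.1 hu _) (differentiableAt_pi.1 hv _),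
    Finset.sum_add_distrib]

lemma xdiv_sub (hu : DifferentiableAt ℝ u z) (hv : DifferentiableAt ℝ v z) :
    xdiv (fun y j => u y j - v y j) z = xdiv u z - xdiv v z := by
  simp [xdiv, xder, fderiv_fun_sub (differentiableAt_pi.1 hu _) (differentiableAt_pi.1 hv _),
    Finset.sum_sub_distrib]

lemma xdiv_const_mul (hu : DifferentiableAt ℝ u z) (c : ℝ) :
    xdiv (fun y j => c * u y j) z = c * xdiv u z := by
  simp [xdiv, xder, fderiv_const_mul (differentiableAt_pi.1 hu _), Finset.mul_sum]

lemma xdiv_mul (hf : DifferentiableAt ℝ f z) (hu : DifferentiableAt ℝ u z) :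
    xdiv (fun y j => f y * u y j) z = dotv (u z) (xgrad f z) + f z * xdiv u z := by
  simp only [xdiv, xder_mul hf (differentiableAt_pi.1 hu _), dotv, xgrad, Finset.mul_sum,
    Finset.sum_add_distrib]
  ring

lemma xdiv_transpose_mulVec {M : ℝ × (Fin d → ℝ) → Fin d → Fin d → ℝ}
    (hM : ∀ i j, DifferentiableAt ℝ (fun y => M y i j) z) (hu : DifferentiableAt ℝ u z) :
    xdiv (fun y j => ∑ i, M y i j * u y i) z = dotv (u z) (mdiv M z) + frob (M z) (xjac u z) := by
  have row_product (j : Fin d) : xder j (fun y => ∑ i, M y i j * u y i) z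
      = ∑ i, (M z i j * xder j (fun y => u y i) z + u z i * xder j (fun y => M y i j) z) := by
    simp only [← xder_mul (hM _ j) (differentiableAt_pi.1 hu _)]
    simp [xder, fderiv_fun_sum fun i _ => (hM i j).fun_mul (differentiableAt_pi.1 hu i)]
  simp only [xdiv, row_product, dotv, mdiv, frob, xjac, Finset.mul_sum]
  rw [Finset.sum_comm, ← Finset.sum_add_distrib]
  refine Finset.sum_congr rfl fun i _ => ?_
  rw [← Finset.sum_add_distrib]
  exact Finset.sum_congr rfl fun j _ => add_comm _ _

lemma tder_add_xdiv_mul (hf : DifferentiableAt ℝ f z) (hu : DifferentiableAt ℝ u z) :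
    tder f z + xdiv (fun y j => f y * u y j) z = materialDeriv u f z + f z * xdiv u z := by
  rw [xdiv_mul hf hu, materialDeriv_eq_tder_add]
  ring

lemma xD_symm (u : ℝ × (Fin d → ℝ) → Fin d → ℝ) (z : ℝ × (Fin d → ℝ)) (i j : Fin d) :
    xD u z i j = xD u z j i := by
  simp [xD, add_comm]

lemma xD_sub (hu : DifferentiableAt ℝ u z) (hv : DifferentiableAt ℝ v z) (i j : Fin d) :
    xD (u - v) z i j = xD u z i j - xD v z i j := by
  simp only [xD, xjac, Pi.sub_apply, xder_sub (differentiableAt_pi.1 hu _)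
    (differentiableAt_pi.1 hv _)]
  ring

lemma xdiv_eq_sum_xD (u : ℝ × (Fin d → ℝ) → Fin d → ℝ) (z : ℝ × (Fin d → ℝ)) :
    xdiv u z = ∑ i, xD u z i i := by
  simp [xdiv, xD, xjac]

lemma frob_xjac_of_symm {S : Fin d → Fin d → ℝ} (hS : ∀ i j, S i j = S j i)
    (u : ℝ × (Fin d → ℝ) → Fin d → ℝ) (z : ℝ × (Fin d → ℝ)) :
    frob S (xjac u z) = frob S (xD u z) := by
  have transpose : frob S (xjac u z) = ∑ i, ∑ j, S i j * xjac u z j i := by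
    rw [frob, Finset.sum_comm]
    simp only [hS]
  have average : frob S (xD u z) = (frob S (xjac u z) + ∑ i, ∑ j, S i j * xjac u z j i) / 2 := by
    simp only [frob, xD, ← Finset.sum_add_distrib, Finset.sum_div]
    exact Finset.sum_congr rfl fun i _ => Finset.sum_congr rfl fun j _ => by ring
  rw [average, ← transpose]
  ring

end Calculus

section Analysis

lemma hasDerivAt_setIntegral_of_contDiff {X E : Type*} [NormedAddCommGroup X] [NormedSpace ℝ X]
    [MeasurableSpace X] [OpensMeasurableSpace X] [NormedAddCommGroup E] [NormedSpace ℝ E]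
    {ν : Measure X} [IsFiniteMeasureOnCompacts ν] {K : Set X} (hK : IsCompact K) {f : ℝ × X → E}
    (hf : ContDiff ℝ 1 f) (t : ℝ) :
    HasDerivAt (fun s => ∫ x in K, f (s, x) ∂ν) (∫ x in K, fderiv ℝ f (t, x) (1, 0) ∂ν) t := by
  have hf' : Continuous fun z => fderiv ℝ f z (1, 0) :=
    (hf.continuous_fderiv one_ne_zero).clm_apply continuous_const
  have slice {g : ℝ × X → E} (hg : Continuous g) (s : ℝ) : ContinuousOn (fun x => g (s, x)) K :=
    (hg.comp (Continuous.prodMk_right s)).continuousOn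
  obtain ⟨M, hM⟩ := ((isCompact_Icc (a := t - 1) (b := t + 1)).prod hK).exists_bound_of_continuousOn
    hf'.continuousOn
  refine (hasDerivAt_integral_of_dominated_loc_of_deriv_le (bound := fun _ => M)
    (F := fun s x => f (s, x)) (F' := fun s x => fderiv ℝ f (s, x) (1, 0))
    (Icc_mem_nhds (sub_one_lt t) (lt_add_one t)) ?measurable ?integrable ?measurable_deriv ?bound
    ?integrable_bound ?deriv).2
  case measurable =>
    exact .of_forall fun s => (slice hf.continuous s).aestronglyMeasurable_of_isCompact hK
      hK.measurableSet
  case integrable => exact (slice hf.continuous t).integrableOn_compact hK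
  case measurable_deriv => exact (slice hf' t).aestronglyMeasurable_of_isCompact hK hK.measurableSet
  case bound =>
    exact (ae_restrict_iff' hK.measurableSet).2 (.of_forall fun x hx s hs => hM (s, x) ⟨hs, hx⟩)
  case integrable_bound => exact continuousOn_const.integrableOn_compact hK
  case deriv =>
    exact .of_forall fun x s _ =>
      (hf.differentiable one_ne_zero (s, x)).hasFDerivAt.comp_hasDerivAt s
        ((hasDerivAt_id s).prodMk (hasDerivAt_const s x))

lemma nonpos_of_hasDerivAt_le_mul {E E' : ℝ → ℝ} {C T : ℝ}
    (hE : ∀ t ∈ Icc 0 T, HasDerivAt E (E' t) t) (h0 : E 0 ≤ 0)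
    (hle : ∀ t ∈ Icc 0 T, E' t ≤ C * E t) : ∀ t ∈ Icc 0 T, E t ≤ 0 := by
  intro t ht
  have := le_gronwallBound_of_liminf_deriv_right_le (δ := 0) (K := C) (ε := 0)
    (fun s hs => (hE s hs).continuousAt.continuousWithinAt)
    (fun s hs r hr =>
      (hE s (Ico_subset_Icc_self hs)).hasDerivWithinAt.liminf_right_slope_le hr) h0
    (fun s hs => by simpa using hle s (Ico_subset_Icc_self hs)) t ht
  rwa [gronwallBound_ε0_δ0] at this

lemma eqOn_zero_of_setIntegral_nonpos {g : (Fin d → ℝ) → ℝ} (hg : ContinuousOn g (Icc 0 1))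
    (hg0 : ∀ x, 0 ≤ g x) (hint : ∫ x in Icc 0 1, g x ≤ 0) : EqOn g 0 (Icc 0 1) := by
  have integral_eq : ∫ x in Icc 0 1, g x = 0 := le_antisymm hint (integral_nonneg hg0)
  rw [setIntegral_eq_zero_iff_of_nonneg_ae (.of_forall hg0)
    (hg.integrableOn_compact isCompact_Icc)] at integral_eq
  refine Measure.eqOn_of_ae_eq integral_eq hg continuousOn_const ?_
  rw [← pi_univ_Icc, interior_pi_set finite_univ, closure_pi_set]
  simp

lemma exists_abs_comp_sub_comp_le_mul {X : Type*} [TopologicalSpace X] {K : Set X}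
    (hK : IsCompact K) {U : Set ℝ} (hU : IsOpen U) {p : ℝ → ℝ} (hp : ContDiffOn ℝ 1 p U)
    {ρ₁ ρ₂ : X → ℝ} (hρ₁ : ContinuousOn ρ₁ K) (hρ₂ : ContinuousOn ρ₂ K) (hU₁ : MapsTo ρ₁ K U)
    (hU₂ : MapsTo ρ₂ K U) : ∃ L, ∀ z ∈ K, |p (ρ₁ z) - p (ρ₂ z)| ≤ L * |ρ₁ z - ρ₂ z| := by
  have locally_lipschitz : LocallyLipschitzOn U p := fun s hs => by
    obtain ⟨L, V, hV, hL⟩ := (hp.contDiffAt (hU.mem_nhds hs)).exists_lipschitzOnWith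
    exact ⟨L, V, mem_nhdsWithin_of_mem_nhds hV, hL⟩
  obtain ⟨L, hL⟩ := (locally_lipschitz.mono (union_subset hU₁.image_subset
    hU₂.image_subset)).exists_lipschitzOnWith_of_compact
    ((hK.image_of_continuousOn hρ₁).union (hK.image_of_continuousOn hρ₂))
  exact ⟨L, fun z hz => hL.dist_le_mul _ (.inl (mem_image_of_mem _ hz)) _
    (.inr (mem_image_of_mem _ hz))⟩

variable {f : ℝ × (Fin d → ℝ) → ℝ} {u : ℝ × (Fin d → ℝ) → Fin d → ℝ}

lemma PeriodicX.exists_mem_Icc_eq (hf : PeriodicX f) (t : ℝ) (x : Fin d → ℝ) :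
    ∃ y ∈ Icc (0 : Fin d → ℝ) 1, f (t, x) = f (t, y) := by
  refine ⟨_, ⟨fun i => ?_, fun i => ?_⟩, (hf t x fun i => -⌊x i⌋).symm⟩
  · simp [← sub_eq_add_neg]
  · simpa [← sub_eq_add_neg] using (Int.fract_lt_one (x i)).le

lemma PeriodicX.fderiv_apply (hf : PeriodicX f) (v : ℝ × (Fin d → ℝ)) :
    PeriodicX fun z => fderiv ℝ f z v := by
  intro t x k
  have shift : (fun z => f (z + (0, fun i => (k i : ℝ)))) = f := by
    funext ⟨s, y⟩
    simpa using hf s y k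
  have := fderiv_comp_add_right (𝕜 := ℝ) (f := f) (x := (t, x)) (0, fun i => (k i : ℝ))
  rw [shift] at this
  simp [this]

lemma contDiff_xder {m n : WithTop ℕ∞} (hf : ContDiff ℝ n f) (hmn : m + 1 ≤ n) (i : Fin d) :
    ContDiff ℝ m (xder i f) :=
  (hf.fderiv_right hmn).clm_apply contDiff_const

lemma continuous_xdiv (hu : ContDiff ℝ 1 u) : Continuous (xdiv u) :=
  continuous_finsetSum _ fun i _ =>
    (contDiff_xder (m := 0) (contDiff_pi.1 hu i) (by simp) i).continuous

lemma setIntegral_xdiv_eq_zero (hu : ContDiff ℝ 1 u) (hper : ∀ i, PeriodicX fun z => u z i)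
    (t : ℝ) : ∫ x in Icc 0 1, xdiv u (t, x) = 0 := by
  obtain _ | n := d
  · simp [xdiv]
  let u' (i : Fin (n + 1)) (x : Fin (n + 1) → ℝ) : (Fin (n + 1) → ℝ) →L[ℝ] ℝ :=
    (fderiv ℝ (fun z => u z i) (t, x)).comp (.inr ℝ ℝ _)
  have xdiv_eq (x : Fin (n + 1) → ℝ) : xdiv u (t, x) = ∑ i, u' i x (Pi.single i 1) := by
    simp [xdiv, xder, u']
  have hasFDerivAt (x : Fin (n + 1) → ℝ) (i : Fin (n + 1)) :
      HasFDerivAt (fun x => u (t, x) i) (u' i x) x :=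
    ((contDiff_pi.1 hu i).differentiable one_ne_zero (t, x)).hasFDerivAt.comp x
      (hasFDerivAt_prodMk_right t x)
  have integrable : IntegrableOn (fun x => xdiv u (t, x)) (Icc 0 1) :=
    ((continuous_xdiv hu).comp (Continuous.prodMk_right t)).continuousOn.integrableOn_compact
      isCompact_Icc
  simp only [xdiv_eq] at integrable ⊢
  rw [integral_divergence_of_hasFDerivAt_off_countable' 0 1 zero_le_one (fun i x => u (t, x) i) u'
    ∅ countable_empty (fun i x _ => (hasFDerivAt x i).continuousAt.continuousWithinAt)
    (fun x _ i => hasFDerivAt x i) integrable]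
  refine Finset.sum_eq_zero fun i _ => sub_eq_zero.2 ?_
  have opposite_faces (y : Fin n → ℝ) :
      u (t, i.insertNth 1 y) i = u (t, i.insertNth 0 y) i := by
    refine .trans (congrArg (fun x => u (t, x) i) ?_) (hper i t (i.insertNth 0 y) (Pi.single i 1))
    ext j
    cases j using Fin.succAboveCases i <;> simp
  simp only [Pi.one_apply, Pi.zero_apply, opposite_faces]

lemma eq_zero_of_tder_add_xdiv_le {T : ℝ} {κ : ℝ × (Fin d → ℝ) → ℝ} (hf : ContDiff ℝ 1 f)
    (hf0 : ∀ z, 0 ≤ f z) (hfper : PeriodicX f) (hu : ContDiff ℝ 1 u)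
    (huper : ∀ i, PeriodicX fun z => u z i) (hκ : Continuous κ)
    (hle : ∀ t ∈ Icc 0 T, ∀ x ∈ Icc 0 1, tder f (t, x) + xdiv u (t, x) ≤ κ (t, x) * f (t, x))
    (hinit : ∀ x, f (0, x) = 0) : ∀ t ∈ Icc 0 T, ∀ x, f (t, x) = 0 := by
  obtain ⟨C, hC⟩ := ((isCompact_Icc (a := 0) (b := T)).prod
    (isCompact_Icc (a := (0 : Fin d → ℝ)) (b := 1))).exists_bound_of_continuousOn hκ.continuousOn
  have integrable {g : ℝ × (Fin d → ℝ) → ℝ} (hg : Continuous g) (t : ℝ) :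
      IntegrableOn (fun x => g (t, x)) (Icc 0 1) :=
    (hg.comp (Continuous.prodMk_right t)).continuousOn.integrableOn_compact isCompact_Icc
  have hf' : Continuous (tder f) :=
    (hf.continuous_fderiv one_ne_zero).clm_apply continuous_const
  have integral_tder_le : ∀ t ∈ Icc 0 T,
      ∫ x in Icc 0 1, tder f (t, x) ≤ C * ∫ x in Icc 0 1, f (t, x) := fun t ht =>
    calc ∫ x in Icc 0 1, tder f (t, x)
        = ∫ x in Icc 0 1, (tder f (t, x) + xdiv u (t, x)) := by
          rw [integral_add (integrable hf' t) (integrable (continuous_xdiv hu) t),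
            setIntegral_xdiv_eq_zero hu huper, add_zero]
      _ ≤ ∫ x in Icc 0 1, C * f (t, x) :=
          setIntegral_mono_on ((integrable hf' t).add (integrable (continuous_xdiv hu) t))
            ((integrable hf.continuous t).const_mul C) measurableSet_Icc fun x hx =>
            (hle t ht x hx).trans <| mul_le_mul_of_nonneg_right
              ((le_abs_self _).trans (hC (t, x) ⟨ht, hx⟩)) (hf0 _)
      _ = C * ∫ x in Icc 0 1, f (t, x) := integral_const_mul C _
  have integral_nonpos := nonpos_of_hasDerivAt_le_mul
    (fun t _ => hasDerivAt_setIntegral_of_contDiff isCompact_Icc hf t) (by simp [hinit])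
    integral_tder_le
  intro t ht x
  obtain ⟨y, hy, hxy⟩ := hfper.exists_mem_Icc_eq t x
  rw [hxy]
  exact eqOn_zero_of_setIntegral_nonpos
    (hf.continuous.comp (Continuous.prodMk_right t)).continuousOn (fun y => hf0 (t, y))
    (integral_nonpos t ht) hy

end Analysis

section NavierStokes

variable {μ : ℝ} {p : ℝ → ℝ} {ρ : ℝ × (Fin d → ℝ) → ℝ} {u : ℝ × (Fin d → ℝ) → Fin d → ℝ}
  {z : ℝ × (Fin d → ℝ)}

lemma MassEq.materialDeriv_density (h : MassEq ρ u z) (hρ : DifferentiableAt ℝ ρ z)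
    (hu : DifferentiableAt ℝ u z) : materialDeriv u ρ z = -(ρ z * xdiv u z) := by
  have := tder_add_xdiv_mul hρ hu
  rw [h] at this
  linarith

/-- Momentum equation `∂ₜ(ρu) + div(ρ u ⊗ u) + ∇p(ρ) - 2 μ div(ρ D(u)) = 0` at the point `z`, for
an arbitrary barotropic pressure law `p`; `MomEq μ a γ` is the case `p s = a * s ^ γ`. -/
def BarotropicMomEq (μ : ℝ) (p : ℝ → ℝ) (ρ : ℝ × (Fin d → ℝ) → ℝ)
    (u : ℝ × (Fin d → ℝ) → Fin d → ℝ) (z : ℝ × (Fin d → ℝ)) : Prop :=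
  ∀ i, tder (fun y => ρ y * u y i) z
      + mdiv (fun y i j => ρ y * u y i * u y j) z i
      + xder i (fun y => p (ρ y)) z
      - 2 * μ * mdiv (fun y i j => ρ y * xD u y i j) z i = 0

lemma BarotropicMomEq.mul_materialAccel (h : BarotropicMomEq μ p ρ u z) (hm : MassEq ρ u z)
    (hρ : DifferentiableAt ℝ ρ z) (hu : DifferentiableAt ℝ u z) (i : Fin d) :
    ρ z * materialAccel u z i
      = 2 * μ * mdiv (fun y i j => ρ y * xD u y i j) z i - xder i (fun y => p (ρ y)) z := by
  have inertia : tder (fun y => ρ y * u y i) z + mdiv (fun y i j => ρ y * u y i * u y j) z i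
      = ρ z * materialAccel u z i := by
    have hui := differentiableAt_pi.1 hu i
    refine (tder_add_xdiv_mul (hρ.fun_mul hui) hu).trans ?_
    rw [materialDeriv_mul hρ hui, hm.materialDeriv_density hρ hu, materialAccel]
    ring
  linear_combination h i - inertia

/-- A classical solution on `[0,T] × ℝᵈ` of the barotropic Navier–Stokes system with viscosities
`ν(ρ) = μρ` and `λ(ρ) = 0`, periodic in space and without vacuum. Both `ρ` and `u` are
functions on the whole of `ℝ × ℝᵈ`, and only the equations are restricted to `[0,T]`. -/
structure IsClassicalSolution (μ : ℝ) (p : ℝ → ℝ) (T : ℝ) (ρ : ℝ × (Fin d → ℝ) → ℝ)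
    (u : ℝ × (Fin d → ℝ) → Fin d → ℝ) : Prop where
  contDiff_density : ContDiff ℝ 1 ρ
  contDiff_velocity : ContDiff ℝ 2 u
  periodic_density : PeriodicX ρ
  periodic_velocity : ∀ i, PeriodicX fun z => u z i
  density_pos : ∀ z, 0 < ρ z
  massEq : ∀ z, z.1 ∈ Icc 0 T → MassEq ρ u z
  momEq : ∀ z, z.1 ∈ Icc 0 T → BarotropicMomEq μ p ρ u z

end NavierStokes

section RelativeEnergy

variable {μ T : ℝ} {p : ℝ → ℝ} {ρ ρ₁ ρ₂ : ℝ × (Fin d → ℝ) → ℝ}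
  {u u₁ u₂ : ℝ × (Fin d → ℝ) → Fin d → ℝ} {z : ℝ × (Fin d → ℝ)}

namespace IsClassicalSolution

lemma differentiableAt_density (h : IsClassicalSolution μ p T ρ u) (z : ℝ × (Fin d → ℝ)) :
    DifferentiableAt ℝ ρ z :=
  h.contDiff_density.differentiable one_ne_zero z

lemma differentiableAt_velocity (h : IsClassicalSolution μ p T ρ u) (z : ℝ × (Fin d → ℝ)) :
    DifferentiableAt ℝ u z :=
  h.contDiff_velocity.differentiable two_ne_zero z

lemma contDiff_xD (h : IsClassicalSolution μ p T ρ u) (i j : Fin d) :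
    ContDiff ℝ 1 fun z => xD u z i j := by
  have hu := contDiff_pi.1 h.contDiff_velocity
  exact ((contDiff_xder (hu i) one_add_one_eq_two.le j).add
    (contDiff_xder (hu j) one_add_one_eq_two.le i)).div_const 2

lemma contDiff_pressure (h : IsClassicalSolution μ p T ρ u) (hp : ContDiffOn ℝ 1 p (Ioi 0)) :
    ContDiff ℝ 1 fun z => p (ρ z) :=
  hp.comp_contDiff h.contDiff_density h.density_pos

lemma velocity_add_intCast (h : IsClassicalSolution μ p T ρ u) (t : ℝ) (x : Fin d → ℝ)
    (k : Fin d → ℤ) : u (t, x + fun i => (k i : ℝ)) = u (t, x) :=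
  funext fun i => h.periodic_velocity i t x k

lemma periodic_xD (h : IsClassicalSolution μ p T ρ u) (i j : Fin d) :
    PeriodicX fun z => xD u z i j := fun t x k =>
  congrArg₂ (fun a b => (a + b) / 2) ((h.periodic_velocity i).fderiv_apply _ t x k)
    ((h.periodic_velocity j).fderiv_apply _ t x k)

end IsClassicalSolution

/-- Relative energy `ρ₁ |u₁ - u₂|² / 2 + (ρ₁ - ρ₂)² / 2` of the first solution with respect to the
second. The quadratic density term takes the place of the relative pressure potential, which would
be coercive only for a monotone pressure law. -/
def relEnergy (ρ₁ ρ₂ : ℝ × (Fin d → ℝ) → ℝ) (u₁ u₂ : ℝ × (Fin d → ℝ) → Fin d → ℝ)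
    (z : ℝ × (Fin d → ℝ)) : ℝ :=
  ρ₁ z * (dotv (u₁ z - u₂ z) (u₁ z - u₂ z) / 2) + (ρ₁ z - ρ₂ z) ^ 2 / 2

/-- Difference `ρ₁ D(u₁) - ρ₂ D(u₂)` of the viscous stresses of two flows, without the factor
`2 μ`. -/
def relStress (ρ₁ ρ₂ : ℝ × (Fin d → ℝ) → ℝ) (u₁ u₂ : ℝ × (Fin d → ℝ) → Fin d → ℝ)
    (z : ℝ × (Fin d → ℝ)) : Fin d → Fin d → ℝ :=
  fun i j => ρ₁ z * xD u₁ z i j - ρ₂ z * xD u₂ z i j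

/-- Flux of the relative energy: its transport by `u₁` and the power of the differences of pressure
and viscous stress against `u₁ - u₂`. -/
def relFlux (μ : ℝ) (p : ℝ → ℝ) (ρ₁ ρ₂ : ℝ × (Fin d → ℝ) → ℝ)
    (u₁ u₂ : ℝ × (Fin d → ℝ) → Fin d → ℝ) (z : ℝ × (Fin d → ℝ)) : Fin d → ℝ :=
  fun j => relEnergy ρ₁ ρ₂ u₁ u₂ z * u₁ z j + (p (ρ₁ z) - p (ρ₂ z)) * (u₁ z j - u₂ z j)
    - 2 * μ * ∑ i, relStress ρ₁ ρ₂ u₁ u₂ z i j * (u₁ z i - u₂ z i)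

lemma relEnergy_nonneg (hρ : 0 < ρ₁ z) : 0 ≤ relEnergy ρ₁ ρ₂ u₁ u₂ z := by
  have := dotv_self_nonneg (u₁ z - u₂ z)
  unfold relEnergy
  positivity

lemma relEnergy_eq_zero (hρ : 0 < ρ₁ z) :
    relEnergy ρ₁ ρ₂ u₁ u₂ z = 0 ↔ ρ₁ z = ρ₂ z ∧ u₁ z = u₂ z := by
  have := dotv_self_nonneg (u₁ z - u₂ z)
  rw [relEnergy, add_eq_zero_iff_of_nonneg (by positivity) (by positivity), and_comm]
  simp [hρ.ne', dotv_self_eq_zero, sub_eq_zero]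

lemma frob_relStress_xD_sub (hu₁ : DifferentiableAt ℝ u₁ z) (hu₂ : DifferentiableAt ℝ u₂ z) :
    frob (relStress ρ₁ ρ₂ u₁ u₂ z) (xD (u₁ - u₂) z)
      = ρ₁ z * frob (xD (u₁ - u₂) z) (xD (u₁ - u₂) z)
        + (ρ₁ z - ρ₂ z) * frob (xD u₂ z) (xD (u₁ - u₂) z) := by
  simp only [frob, relStress, Finset.mul_sum, ← Finset.sum_add_distrib, xD_sub hu₁ hu₂]
  exact Finset.sum_congr rfl fun i _ => Finset.sum_congr rfl fun j _ => by ring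

lemma MassEq.materialDeriv_density_sub (hm₁ : MassEq ρ₁ u₁ z) (hm₂ : MassEq ρ₂ u₂ z)
    (hρ₁ : DifferentiableAt ℝ ρ₁ z) (hρ₂ : DifferentiableAt ℝ ρ₂ z)
    (hu₁ : DifferentiableAt ℝ u₁ z) (hu₂ : DifferentiableAt ℝ u₂ z) :
    materialDeriv u₁ (fun y => ρ₁ y - ρ₂ y) z
      = -((ρ₁ z - ρ₂ z) * xdiv u₁ z) - ρ₂ z * xdiv (u₁ - u₂) z
        - dotv (u₁ z - u₂ z) (xgrad ρ₂ z) := by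
  have xdiv_diff : xdiv (u₁ - u₂) z = xdiv u₁ z - xdiv u₂ z := xdiv_sub hu₁ hu₂
  rw [materialDeriv_sub hρ₁ hρ₂, hm₁.materialDeriv_density hρ₁ hu₁,
    materialDeriv_eq_add_dotv_sub u₁ u₂ ρ₂, hm₂.materialDeriv_density hρ₂ hu₂, xdiv_diff]
  ring

lemma tder_relEnergy_add_xdiv_mul (hm₁ : MassEq ρ₁ u₁ z) (hρ₁ : DifferentiableAt ℝ ρ₁ z)
    (hρ₂ : DifferentiableAt ℝ ρ₂ z) (hu₁ : DifferentiableAt ℝ u₁ z)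
    (hu₂ : DifferentiableAt ℝ u₂ z) :
    tder (relEnergy ρ₁ ρ₂ u₁ u₂) z + xdiv (fun y j => relEnergy ρ₁ ρ₂ u₁ u₂ y * u₁ y j) z
      = dotv (u₁ z - u₂ z) (fun i => ρ₁ z * materialDeriv u₁ (fun y => u₁ y i - u₂ y i) z)
        + (ρ₁ z - ρ₂ z) * materialDeriv u₁ (fun y => ρ₁ y - ρ₂ y) z
        + (ρ₁ z - ρ₂ z) ^ 2 / 2 * xdiv u₁ z := by
  have hw : DifferentiableAt ℝ (fun y => u₁ y - u₂ y) z := hu₁.fun_sub hu₂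
  have hr : DifferentiableAt ℝ (fun y => ρ₁ y - ρ₂ y) z := hρ₁.fun_sub hρ₂
  have hk : DifferentiableAt ℝ (fun y => dotv (u₁ y - u₂ y) (u₁ y - u₂ y) / 2) z := by
    have := differentiableAt_pi.1 hw
    unfold dotv
    fun_prop
  have hk' : materialDeriv u₁ (fun y => ρ₁ y * (dotv (u₁ y - u₂ y) (u₁ y - u₂ y) / 2)) z
      = materialDeriv u₁ ρ₁ z * (dotv (u₁ z - u₂ z) (u₁ z - u₂ z) / 2)
        + ρ₁ z * dotv (u₁ z - u₂ z) (fun i => materialDeriv u₁ (fun y => u₁ y i - u₂ y i) z) := by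
    rw [materialDeriv_mul hρ₁ hk, materialDeriv_dotv_self_div_two hw]
    rfl
  have he : materialDeriv u₁ (relEnergy ρ₁ ρ₂ u₁ u₂) z
      = materialDeriv u₁ ρ₁ z * (dotv (u₁ z - u₂ z) (u₁ z - u₂ z) / 2)
        + ρ₁ z * dotv (u₁ z - u₂ z) (fun i => materialDeriv u₁ (fun y => u₁ y i - u₂ y i) z)
        + (ρ₁ z - ρ₂ z) * materialDeriv u₁ (fun y => ρ₁ y - ρ₂ y) z := by
    rw [← hk', ← materialDeriv_sq_div_two hr]
    exact materialDeriv_add (hρ₁.fun_mul hk) ((hr.fun_pow 2).mul_const _)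
  have he_diff : DifferentiableAt ℝ (relEnergy ρ₁ ρ₂ u₁ u₂) z :=
    (hρ₁.fun_mul hk).fun_add ((hr.fun_pow 2).mul_const _)
  have mul_dotv : dotv (u₁ z - u₂ z) (fun i => ρ₁ z * materialDeriv u₁ (fun y => u₁ y i - u₂ y i) z)
      = ρ₁ z * dotv (u₁ z - u₂ z) fun i => materialDeriv u₁ (fun y => u₁ y i - u₂ y i) z :=
    dotProduct_smul (ρ₁ z) (u₁ z - u₂ z) _
  rw [tder_add_xdiv_mul he_diff hu₁, he, hm₁.materialDeriv_density hρ₁ hu₁, relEnergy, mul_dotv]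
  ring

namespace IsClassicalSolution

lemma contDiff_relEnergy (h₁ : IsClassicalSolution μ p T ρ₁ u₁)
    (h₂ : IsClassicalSolution μ p T ρ₂ u₂) : ContDiff ℝ 1 (relEnergy ρ₁ ρ₂ u₁ u₂) := by
  have hρ₁ := h₁.contDiff_density
  have hρ₂ := h₂.contDiff_density
  have hu₁ := contDiff_pi.1 (h₁.contDiff_velocity.of_le one_le_two)
  have hu₂ := contDiff_pi.1 (h₂.contDiff_velocity.of_le one_le_two)
  unfold relEnergy dotv
  simp only [Pi.sub_apply]
  fun_prop

lemma contDiff_relStress (h₁ : IsClassicalSolution μ p T ρ₁ u₁)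
    (h₂ : IsClassicalSolution μ p T ρ₂ u₂) (i j : Fin d) :
    ContDiff ℝ 1 fun z => relStress ρ₁ ρ₂ u₁ u₂ z i j :=
  (h₁.contDiff_density.mul (h₁.contDiff_xD i j)).sub (h₂.contDiff_density.mul (h₂.contDiff_xD i j))

lemma mul_materialDeriv_velocity_sub (h₁ : IsClassicalSolution μ p T ρ₁ u₁)
    (h₂ : IsClassicalSolution μ p T ρ₂ u₂) (hp : ContDiffOn ℝ 1 p (Ioi 0)) (hz : z.1 ∈ Icc 0 T)
    (i : Fin d) :
    ρ₁ z * materialDeriv u₁ (fun y => u₁ y i - u₂ y i) z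
      = 2 * μ * mdiv (relStress ρ₁ ρ₂ u₁ u₂) z i - xder i (fun y => p (ρ₁ y) - p (ρ₂ y)) z
        - (ρ₁ z - ρ₂ z) * materialAccel u₂ z i
        - ρ₁ z * dotv (xjac u₂ z i) (u₁ z - u₂ z) := by
  have accel₁ := (h₁.momEq z hz).mul_materialAccel (h₁.massEq z hz)
    (h₁.differentiableAt_density z) (h₁.differentiableAt_velocity z) i
  have accel₂ := (h₂.momEq z hz).mul_materialAccel (h₂.massEq z hz)
    (h₂.differentiableAt_density z) (h₂.differentiableAt_velocity z) i
  have accel_diff : materialDeriv u₁ (fun y => u₁ y i - u₂ y i) z = materialAccel u₁ z i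
      - (materialAccel u₂ z i + dotv (u₁ z - u₂ z) (xjac u₂ z i)) := by
    rw [materialDeriv_sub (differentiableAt_pi.1 (h₁.differentiableAt_velocity z) i)
      (differentiableAt_pi.1 (h₂.differentiableAt_velocity z) i),
      materialDeriv_eq_add_dotv_sub u₁ u₂ fun y => u₂ y i]
    rfl
  have stress : mdiv (relStress ρ₁ ρ₂ u₁ u₂) z i
      = mdiv (fun y i j => ρ₁ y * xD u₁ y i j) z i - mdiv (fun y i j => ρ₂ y * xD u₂ y i j) z i :=
    xdiv_sub
      (differentiableAt_pi.2 fun j => (h₁.differentiableAt_density z).fun_mul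
        ((h₁.contDiff_xD i j).differentiable one_ne_zero z))
      (differentiableAt_pi.2 fun j => (h₂.differentiableAt_density z).fun_mul
        ((h₂.contDiff_xD i j).differentiable one_ne_zero z))
  have dotv_symm : dotv (xjac u₂ z i) (u₁ z - u₂ z) = dotv (u₁ z - u₂ z) (xjac u₂ z i) :=
    dotProduct_comm _ _
  rw [accel_diff, stress, dotv_symm,
    xder_sub ((h₁.contDiff_pressure hp).differentiable one_ne_zero z)
      ((h₂.contDiff_pressure hp).differentiable one_ne_zero z)]
  linear_combination accel₁ - accel₂

lemma xdiv_relFlux (h₁ : IsClassicalSolution μ p T ρ₁ u₁) (h₂ : IsClassicalSolution μ p T ρ₂ u₂)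
    (hp : ContDiffOn ℝ 1 p (Ioi 0)) :
    xdiv (relFlux μ p ρ₁ ρ₂ u₁ u₂) z
      = xdiv (fun y j => relEnergy ρ₁ ρ₂ u₁ u₂ y * u₁ y j) z
        + (dotv (u₁ z - u₂ z) (xgrad (fun y => p (ρ₁ y) - p (ρ₂ y)) z)
          + (p (ρ₁ z) - p (ρ₂ z)) * xdiv (u₁ - u₂) z)
        - 2 * μ * (dotv (u₁ z - u₂ z) (mdiv (relStress ρ₁ ρ₂ u₁ u₂) z)
          + frob (relStress ρ₁ ρ₂ u₁ u₂ z) (xD (u₁ - u₂) z)) := by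
  have hw : DifferentiableAt ℝ (u₁ - u₂) z :=
    (h₁.differentiableAt_velocity z).sub (h₂.differentiableAt_velocity z)
  have hq := ((h₁.contDiff_pressure hp).sub (h₂.contDiff_pressure hp)).differentiable one_ne_zero z
  have hS i j := (h₁.contDiff_relStress h₂ i j).differentiable one_ne_zero z
  have relStress_symm i j : relStress ρ₁ ρ₂ u₁ u₂ z i j = relStress ρ₁ ρ₂ u₁ u₂ z j i := by
    simp only [relStress, xD_symm _ z i j]
  have h_transport : DifferentiableAt ℝ (fun y j => relEnergy ρ₁ ρ₂ u₁ u₂ y * u₁ y j) z :=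
    differentiableAt_pi.2 fun j => ((h₁.contDiff_relEnergy h₂).differentiable one_ne_zero z).fun_mul
      (differentiableAt_pi.1 (h₁.differentiableAt_velocity z) j)
  have h_pressure : DifferentiableAt ℝ (fun y j => (p (ρ₁ y) - p (ρ₂ y)) * (u₁ - u₂) y j) z :=
    differentiableAt_pi.2 fun j => hq.fun_mul (differentiableAt_pi.1 hw j)
  have h_stress :
      DifferentiableAt ℝ (fun y j => ∑ i, relStress ρ₁ ρ₂ u₁ u₂ y i j * (u₁ - u₂) y i) z :=
    differentiableAt_pi.2 fun j => .fun_sum fun i _ =>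
      (hS i j).fun_mul (differentiableAt_pi.1 hw i)
  rw [← frob_xjac_of_symm relStress_symm]
  calc xdiv (relFlux μ p ρ₁ ρ₂ u₁ u₂) z
      = xdiv (fun y j => relEnergy ρ₁ ρ₂ u₁ u₂ y * u₁ y j) z
        + xdiv (fun y j => (p (ρ₁ y) - p (ρ₂ y)) * (u₁ - u₂) y j) z
        - 2 * μ * xdiv (fun y j => ∑ i, relStress ρ₁ ρ₂ u₁ u₂ y i j * (u₁ - u₂) y i) z := by
        rw [← xdiv_add h_transport h_pressure, ← xdiv_const_mul h_stress]
        exact xdiv_sub (h_transport.add h_pressure) (h_stress.const_smul (2 * μ))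
    _ = _ := by
        rw [xdiv_mul hq hw, xdiv_transpose_mulVec hS hw]
        rfl

/-- Relative energy balance: the derivatives of `u₁ - u₂` appear on the right only through the
divergence and the symmetric gradient, which the dissipation on the left controls. -/
lemma relEnergy_balance (h₁ : IsClassicalSolution μ p T ρ₁ u₁)
    (h₂ : IsClassicalSolution μ p T ρ₂ u₂) (hp : ContDiffOn ℝ 1 p (Ioi 0)) (hz : z.1 ∈ Icc 0 T) :
    tder (relEnergy ρ₁ ρ₂ u₁ u₂) z + xdiv (relFlux μ p ρ₁ ρ₂ u₁ u₂) z
        + 2 * μ * ρ₁ z * frob (xD (u₁ - u₂) z) (xD (u₁ - u₂) z)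
      = -(ρ₁ z * dotv (u₁ z - u₂ z) fun i => dotv (xjac u₂ z i) (u₁ z - u₂ z))
        - (ρ₁ z - ρ₂ z) * dotv (u₁ z - u₂ z) (materialAccel u₂ z + xgrad ρ₂ z)
        + (p (ρ₁ z) - p (ρ₂ z) - ρ₂ z * (ρ₁ z - ρ₂ z)) * xdiv (u₁ - u₂) z
        - 2 * μ * (ρ₁ z - ρ₂ z) * frob (xD u₂ z) (xD (u₁ - u₂) z)
        - (ρ₁ z - ρ₂ z) ^ 2 / 2 * xdiv u₁ z := by
  have hρ₁ := h₁.differentiableAt_density z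
  have hρ₂ := h₂.differentiableAt_density z
  have hu₁ := h₁.differentiableAt_velocity z
  have hu₂ := h₂.differentiableAt_velocity z
  have hm₁ := h₁.massEq z hz
  have work : dotv (u₁ z - u₂ z) (fun i => ρ₁ z * materialDeriv u₁ (fun y => u₁ y i - u₂ y i) z)
      = 2 * μ * dotv (u₁ z - u₂ z) (mdiv (relStress ρ₁ ρ₂ u₁ u₂) z)
        - dotv (u₁ z - u₂ z) (xgrad (fun y => p (ρ₁ y) - p (ρ₂ y)) z)
        - (ρ₁ z - ρ₂ z) * dotv (u₁ z - u₂ z) (materialAccel u₂ z)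
        - ρ₁ z * dotv (u₁ z - u₂ z) fun i => dotv (xjac u₂ z i) (u₁ z - u₂ z) := by
    simp only [h₁.mul_materialDeriv_velocity_sub h₂ hp hz]
    simp only [dotv, xgrad, Finset.mul_sum, ← Finset.sum_sub_distrib]
    exact Finset.sum_congr rfl fun i _ => by simp only [← Finset.mul_sum]; ring
  have dotv_add : dotv (u₁ z - u₂ z) (materialAccel u₂ z + xgrad ρ₂ z)
      = dotv (u₁ z - u₂ z) (materialAccel u₂ z) + dotv (u₁ z - u₂ z) (xgrad ρ₂ z) :=
    dotProduct_add _ _ _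
  rw [h₁.xdiv_relFlux h₂ hp, dotv_add]
  linear_combination tder_relEnergy_add_xdiv_mul hm₁ hρ₁ hρ₂ hu₁ hu₂ + work
    + (ρ₁ z - ρ₂ z) * hm₁.materialDeriv_density_sub (h₂.massEq z hz) hρ₁ hρ₂ hu₁ hu₂
    - 2 * μ * frob_relStress_xD_sub (ρ₁ := ρ₁) (ρ₂ := ρ₂) hu₁ hu₂

end IsClassicalSolution

lemma kinetic_le_relEnergy :
    ρ₁ z * (dotv (u₁ z - u₂ z) (u₁ z - u₂ z) / 2) ≤ relEnergy ρ₁ ρ₂ u₁ u₂ z :=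
  le_add_of_nonneg_right (by positivity)

lemma sq_density_sub_le_relEnergy (hρ : 0 < ρ₁ z) :
    (ρ₁ z - ρ₂ z) ^ 2 / 2 ≤ relEnergy ρ₁ ρ₂ u₁ u₂ z := by
  have := dotv_self_nonneg (u₁ z - u₂ z)
  exact le_add_of_nonneg_left (by positivity)

lemma abs_convectionTerm_le (hρ : 0 < ρ₁ z) (M : Fin d → Fin d → ℝ) :
    |ρ₁ z * dotv (u₁ z - u₂ z) fun i => dotv (M i) (u₁ z - u₂ z)|
      ≤ (1 + frob M M) * relEnergy ρ₁ ρ₂ u₁ u₂ z := by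
  have := frob_self_nonneg M
  set w := u₁ z - u₂ z
  calc |ρ₁ z * dotv w fun i => dotv (M i) w|
      = ρ₁ z * |dotv w fun i => dotv (M i) w| := by rw [abs_mul, abs_of_pos hρ]
    _ ≤ ρ₁ z * ((1 + frob M M) / 2 * dotv w w) :=
        mul_le_mul_of_nonneg_left (abs_quadraticForm_le M w) hρ.le
    _ = (1 + frob M M) * (ρ₁ z * (dotv w w / 2)) := by ring
    _ ≤ (1 + frob M M) * relEnergy ρ₁ ρ₂ u₁ u₂ z := by
        gcongr
        exact kinetic_le_relEnergy

lemma abs_forcingTerm_le (hρ : 0 < ρ₁ z) (b : Fin d → ℝ) :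
    |(ρ₁ z - ρ₂ z) * dotv (u₁ z - u₂ z) b|
      ≤ (1 + dotv b b / ρ₁ z) * relEnergy ρ₁ ρ₂ u₁ u₂ z := by
  have := dotv_self_nonneg b
  set w := u₁ z - u₂ z
  calc |(ρ₁ z - ρ₂ z) * dotv w b|
      ≤ ρ₁ z / 2 * dotv w w + (ρ₁ z - ρ₂ z) ^ 2 * dotv b b / (4 * (ρ₁ z / 2)) :=
        abs_mul_dotv_le (half_pos hρ) _
    _ = ρ₁ z * (dotv w w / 2) + dotv b b / ρ₁ z * ((ρ₁ z - ρ₂ z) ^ 2 / 2) := by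
        field_simp
        ring
    _ ≤ relEnergy ρ₁ ρ₂ u₁ u₂ z + dotv b b / ρ₁ z * relEnergy ρ₁ ρ₂ u₁ u₂ z := by
        gcongr
        exacts [kinetic_le_relEnergy, sq_density_sub_le_relEnergy hρ]
    _ = (1 + dotv b b / ρ₁ z) * relEnergy ρ₁ ρ₂ u₁ u₂ z := by ring

lemma abs_pressureTerm_le (hρ : 0 < ρ₁ z) (hμ : 0 < μ) {L : ℝ}
    (hL : |p (ρ₁ z) - p (ρ₂ z)| ≤ L * |ρ₁ z - ρ₂ z|) (D : Fin d → Fin d → ℝ) :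
    |(p (ρ₁ z) - p (ρ₂ z) - ρ₂ z * (ρ₁ z - ρ₂ z)) * ∑ i, D i i|
      ≤ μ * ρ₁ z * frob D D
        + d * (L + |ρ₂ z|) ^ 2 / (2 * μ * ρ₁ z) * relEnergy ρ₁ ρ₂ u₁ u₂ z := by
  set r := ρ₁ z - ρ₂ z
  set s := p (ρ₁ z) - p (ρ₂ z) - ρ₂ z * r
  have s_le : |s| ≤ (L + |ρ₂ z|) * |r| :=
    calc |s| ≤ |p (ρ₁ z) - p (ρ₂ z)| + |ρ₂ z * r| := abs_sub _ _
      _ ≤ (L + |ρ₂ z|) * |r| := by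
        rw [abs_mul, add_mul]
        gcongr
  have s_sq_le : s ^ 2 ≤ (L + |ρ₂ z|) ^ 2 * r ^ 2 := by
    simpa only [mul_pow, sq_abs] using pow_le_pow_left₀ (abs_nonneg _) s_le 2
  calc |s * ∑ i, D i i| ≤ μ * ρ₁ z * frob D D + d * s ^ 2 / (4 * (μ * ρ₁ z)) :=
        abs_mul_trace_le (mul_pos hμ hρ) _
    _ ≤ μ * ρ₁ z * frob D D + d * ((L + |ρ₂ z|) ^ 2 * r ^ 2) / (4 * (μ * ρ₁ z)) := by gcongr
    _ = μ * ρ₁ z * frob D D + d * (L + |ρ₂ z|) ^ 2 / (2 * μ * ρ₁ z) * (r ^ 2 / 2) := by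
        field_simp
        ring
    _ ≤ _ := by
        gcongr
        exact sq_density_sub_le_relEnergy hρ

lemma abs_viscousTerm_le (hρ : 0 < ρ₁ z) (hμ : 0 < μ) (S D : Fin d → Fin d → ℝ) :
    |2 * μ * (ρ₁ z - ρ₂ z) * frob S D|
      ≤ μ * ρ₁ z * frob D D + 2 * μ * frob S S / ρ₁ z * relEnergy ρ₁ ρ₂ u₁ u₂ z := by
  have := frob_self_nonneg S
  have frob_comm : frob S D = frob D S := by simp only [frob, mul_comm]
  calc |2 * μ * (ρ₁ z - ρ₂ z) * frob S D|
      ≤ μ * ρ₁ z * frob D D + (2 * μ * (ρ₁ z - ρ₂ z)) ^ 2 * frob S S / (4 * (μ * ρ₁ z)) :=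
        frob_comm ▸ abs_mul_frob_le (mul_pos hμ hρ) _
    _ = μ * ρ₁ z * frob D D + 2 * μ * frob S S / ρ₁ z * ((ρ₁ z - ρ₂ z) ^ 2 / 2) := by
        field_simp
        ring
    _ ≤ _ := by
        gcongr
        exact sq_density_sub_le_relEnergy hρ

lemma abs_compressionTerm_le (hρ : 0 < ρ₁ z) (s : ℝ) :
    |(ρ₁ z - ρ₂ z) ^ 2 / 2 * s| ≤ |s| * relEnergy ρ₁ ρ₂ u₁ u₂ z := by
  rw [abs_mul, abs_of_nonneg (by positivity), mul_comm]
  gcongr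
  exact sq_density_sub_le_relEnergy hρ

/-- Growth rate of the relative energy, where `L` is a Lipschitz constant of the pressure law on the
range of the densities. The summands bound the terms on the right of
`IsClassicalSolution.relEnergy_balance` in their order. -/
def relEnergyRate (μ L : ℝ) (ρ₁ ρ₂ : ℝ × (Fin d → ℝ) → ℝ) (u₁ u₂ : ℝ × (Fin d → ℝ) → Fin d → ℝ)
    (z : ℝ × (Fin d → ℝ)) : ℝ :=
  (1 + frob (xjac u₂ z) (xjac u₂ z))
    + (1 + dotv (materialAccel u₂ z + xgrad ρ₂ z) (materialAccel u₂ z + xgrad ρ₂ z) / ρ₁ z)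
    + d * (L + |ρ₂ z|) ^ 2 / (2 * μ * ρ₁ z)
    + 2 * μ * frob (xD u₂ z) (xD u₂ z) / ρ₁ z
    + |xdiv u₁ z|

namespace IsClassicalSolution

lemma tder_relEnergy_add_xdiv_relFlux_le (h₁ : IsClassicalSolution μ p T ρ₁ u₁)
    (h₂ : IsClassicalSolution μ p T ρ₂ u₂) (hμ : 0 < μ) (hp : ContDiffOn ℝ 1 p (Ioi 0))
    (hz : z.1 ∈ Icc 0 T) {L : ℝ} (hL : |p (ρ₁ z) - p (ρ₂ z)| ≤ L * |ρ₁ z - ρ₂ z|) :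
    tder (relEnergy ρ₁ ρ₂ u₁ u₂) z + xdiv (relFlux μ p ρ₁ ρ₂ u₁ u₂) z
      ≤ relEnergyRate μ L ρ₁ ρ₂ u₁ u₂ z * relEnergy ρ₁ ρ₂ u₁ u₂ z := by
  have hρ := h₁.density_pos z
  have balance := h₁.relEnergy_balance h₂ hp hz
  rw [xdiv_eq_sum_xD (u₁ - u₂)] at balance
  have convection := abs_convectionTerm_le (ρ₂ := ρ₂) (u₁ := u₁) (u₂ := u₂) hρ (xjac u₂ z)
  have forcing := abs_forcingTerm_le (ρ₂ := ρ₂) (u₁ := u₁) (u₂ := u₂) hρ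
    (materialAccel u₂ z + xgrad ρ₂ z)
  have pressure := abs_pressureTerm_le (u₁ := u₁) (u₂ := u₂) hρ hμ hL (xD (u₁ - u₂) z)
  have viscous := abs_viscousTerm_le (ρ₂ := ρ₂) (u₁ := u₁) (u₂ := u₂) hρ hμ (xD u₂ z)
    (xD (u₁ - u₂) z)
  have compression := abs_compressionTerm_le (ρ₂ := ρ₂) (u₁ := u₁) (u₂ := u₂) hρ (xdiv u₁ z)
  simp only [relEnergyRate, add_mul _ _ (relEnergy ρ₁ ρ₂ u₁ u₂ z)]
  linarith [abs_le.1 convection, abs_le.1 forcing, abs_le.1 pressure, abs_le.1 viscous,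
    abs_le.1 compression]

lemma periodic_relEnergy (h₁ : IsClassicalSolution μ p T ρ₁ u₁)
    (h₂ : IsClassicalSolution μ p T ρ₂ u₂) : PeriodicX (relEnergy ρ₁ ρ₂ u₁ u₂) := fun t x k => by
  simp only [relEnergy, h₁.periodic_density t x k, h₂.periodic_density t x k,
    h₁.velocity_add_intCast t x k, h₂.velocity_add_intCast t x k]

lemma periodic_relFlux (h₁ : IsClassicalSolution μ p T ρ₁ u₁)
    (h₂ : IsClassicalSolution μ p T ρ₂ u₂) (j : Fin d) :
    PeriodicX fun z => relFlux μ p ρ₁ ρ₂ u₁ u₂ z j := fun t x k => by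
  simp only [relFlux, relStress, h₁.periodic_relEnergy h₂ t x k, h₁.periodic_density t x k,
    h₂.periodic_density t x k, h₁.velocity_add_intCast t x k, h₂.velocity_add_intCast t x k,
    h₁.periodic_xD _ _ t x k, h₂.periodic_xD _ _ t x k]

lemma contDiff_relFlux (h₁ : IsClassicalSolution μ p T ρ₁ u₁)
    (h₂ : IsClassicalSolution μ p T ρ₂ u₂) (hp : ContDiffOn ℝ 1 p (Ioi 0)) :
    ContDiff ℝ 1 (relFlux μ p ρ₁ ρ₂ u₁ u₂) := by
  have hu₁ := contDiff_pi.1 (h₁.contDiff_velocity.of_le one_le_two)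
  have hu₂ := contDiff_pi.1 (h₂.contDiff_velocity.of_le one_le_two)
  have transport (j : Fin d) : ContDiff ℝ 1 fun z => relEnergy ρ₁ ρ₂ u₁ u₂ z * u₁ z j :=
    (h₁.contDiff_relEnergy h₂).mul (hu₁ j)
  have pressure (j : Fin d) : ContDiff ℝ 1 fun z => (p (ρ₁ z) - p (ρ₂ z)) * (u₁ z j - u₂ z j) :=
    ((h₁.contDiff_pressure hp).sub (h₂.contDiff_pressure hp)).mul ((hu₁ j).sub (hu₂ j))
  have stress (j : Fin d) :
      ContDiff ℝ 1 fun z => ∑ i, relStress ρ₁ ρ₂ u₁ u₂ z i j * (u₁ z i - u₂ z i) :=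
    .sum fun i _ => (h₁.contDiff_relStress h₂ i j).mul ((hu₁ i).sub (hu₂ i))
  exact contDiff_pi.2 fun j => ((transport j).add (pressure j)).sub (contDiff_const.mul (stress j))

lemma continuous_relEnergyRate (h₁ : IsClassicalSolution μ p T ρ₁ u₁)
    (h₂ : IsClassicalSolution μ p T ρ₂ u₂) (hμ : μ ≠ 0) (L : ℝ) :
    Continuous (relEnergyRate μ L ρ₁ ρ₂ u₁ u₂) := by
  have hρ₁ := h₁.contDiff_density.continuous
  have hρ₂ := h₂.contDiff_density.continuous
  have hρ₁_ne z : ρ₁ z ≠ 0 := (h₁.density_pos z).ne'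
  have hμρ₁_ne z : 2 * μ * ρ₁ z ≠ 0 := mul_ne_zero (mul_ne_zero two_ne_zero hμ) (hρ₁_ne z)
  have hxdiv := continuous_xdiv (h₁.contDiff_velocity.of_le one_le_two)
  have hu₂ := contDiff_pi.1 (h₂.contDiff_velocity.of_le one_le_two)
  have hxjac i j : Continuous fun z => xjac u₂ z i j :=
    (contDiff_xder (m := 0) (hu₂ i) (by simp) j).continuous
  have hxD i j := (h₂.contDiff_xD i j).continuous
  have hxgrad i : Continuous fun z => xgrad ρ₂ z i :=
    (contDiff_xder (m := 0) h₂.contDiff_density (by simp) i).continuous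
  have hmaterialAccel i : Continuous fun z => materialAccel u₂ z i :=
    ((hu₂ i).continuous_fderiv one_ne_zero).clm_apply
      (continuous_const.prodMk h₂.contDiff_velocity.continuous)
  unfold relEnergyRate frob dotv
  simp only [Pi.add_apply]
  fun_prop (disch := assumption)

end IsClassicalSolution

end RelativeEnergy

theorem weak_strong_uniqueness_general {μ T : ℝ} {p : ℝ → ℝ} {ρ₁ ρ₂ : ℝ × (Fin d → ℝ) → ℝ}
    {u₁ u₂ : ℝ × (Fin d → ℝ) → Fin d → ℝ} (hμ : 0 < μ) (hp : ContDiffOn ℝ 1 p (Ioi 0))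
    (h₁ : IsClassicalSolution μ p T ρ₁ u₁) (h₂ : IsClassicalSolution μ p T ρ₂ u₂)
    (hinit : ∀ x, ρ₁ (0, x) = ρ₂ (0, x) ∧ u₁ (0, x) = u₂ (0, x)) :
    ∀ t ∈ Icc 0 T, ∀ x, ρ₁ (t, x) = ρ₂ (t, x) ∧ u₁ (t, x) = u₂ (t, x) := by
  obtain ⟨L, hL⟩ := exists_abs_comp_sub_comp_le_mul
    ((isCompact_Icc (a := 0) (b := T)).prod (isCompact_Icc (a := (0 : Fin d → ℝ)) (b := 1)))
    isOpen_Ioi hp h₁.contDiff_density.continuous.continuousOn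
    h₂.contDiff_density.continuous.continuousOn (fun z _ => h₁.density_pos z)
    fun z _ => h₂.density_pos z
  have relEnergy_eq_zero_iff z := relEnergy_eq_zero (ρ₂ := ρ₂) (u₁ := u₁) (u₂ := u₂)
    (h₁.density_pos z)
  have relEnergy_vanishes : ∀ t ∈ Icc 0 T, ∀ x, relEnergy ρ₁ ρ₂ u₁ u₂ (t, x) = 0 :=
    eq_zero_of_tder_add_xdiv_le (h₁.contDiff_relEnergy h₂)
      (fun z => relEnergy_nonneg (h₁.density_pos z)) (h₁.periodic_relEnergy h₂)
      (h₁.contDiff_relFlux h₂ hp) (h₁.periodic_relFlux h₂)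
      (h₁.continuous_relEnergyRate h₂ hμ.ne' L)
      (fun t ht x hx => h₁.tder_relEnergy_add_xdiv_relFlux_le h₂ hμ hp ht (hL (t, x) ⟨ht, hx⟩))
      fun x => (relEnergy_eq_zero_iff (0, x)).2 (hinit x)
  exact fun t ht x => (relEnergy_eq_zero_iff (t, x)).1 (relEnergy_vanishes t ht x)

/-- Uniqueness of smooth, `ℤᵈ`-periodic, uniformly positive
solutions of compressible Navier–Stokes with `ν(ρ) = μρ`, `λ(ρ) = 0` and
`p(s) = a s^γ`: two such solutions with the same initial data coincide on
`[0,T] × ℝᵈ`. -/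
theorem weak_strong_uniqueness
    {d : ℕ} (hd : 1 ≤ d) (μ a γ T : ℝ)
    (hμ : 0 < μ) (ha : 0 < a) (hγ : 1 < γ) (hT : 0 ≤ T)
    (ρ₁ ρ₂ : ℝ × (Fin d → ℝ) → ℝ) (u₁ u₂ : ℝ × (Fin d → ℝ) → Fin d → ℝ)
    (hρ₁ : ContDiff ℝ (⊤ : ℕ∞) ρ₁) (hu₁ : ContDiff ℝ (⊤ : ℕ∞) u₁)
    (hρ₂ : ContDiff ℝ (⊤ : ℕ∞) ρ₂) (hu₂ : ContDiff ℝ (⊤ : ℕ∞) u₂)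
    (hρ₁per : PeriodicX ρ₁) (hu₁per : ∀ i, PeriodicX fun z => u₁ z i)
    (hρ₂per : PeriodicX ρ₂) (hu₂per : ∀ i, PeriodicX fun z => u₂ z i)
    (c₁ c₂ : ℝ) (hc₁ : 0 < c₁) (hc₂ : 0 < c₂)
    (hρ₁lb : ∀ z, c₁ ≤ ρ₁ z) (hρ₂lb : ∀ z, c₂ ≤ ρ₂ z)
    (hmass₁ : ∀ t ∈ Set.Icc 0 T, ∀ x : Fin d → ℝ, MassEq ρ₁ u₁ (t, x))
    (hmom₁ : ∀ t ∈ Set.Icc 0 T, ∀ x : Fin d → ℝ, MomEq μ a γ ρ₁ u₁ (t, x))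
    (hmass₂ : ∀ t ∈ Set.Icc 0 T, ∀ x : Fin d → ℝ, MassEq ρ₂ u₂ (t, x))
    (hmom₂ : ∀ t ∈ Set.Icc 0 T, ∀ x : Fin d → ℝ, MomEq μ a γ ρ₂ u₂ (t, x))
    (hinit : ∀ x : Fin d → ℝ, ρ₁ (0, x) = ρ₂ (0, x) ∧ u₁ (0, x) = u₂ (0, x)) :
    ∀ t ∈ Set.Icc 0 T, ∀ x : Fin d → ℝ,
      ρ₁ (t, x) = ρ₂ (t, x) ∧ u₁ (t, x) = u₂ (t, x) := by
  have hp : ContDiffOn ℝ 1 (fun s => a * s ^ γ) (Ioi 0) := fun s hs =>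
    (contDiffAt_const.mul (contDiffAt_id.rpow_const_of_ne (ne_of_gt hs))).contDiffWithinAt
  exact weak_strong_uniqueness_general hμ hp
    ⟨contDiff_infty.1 hρ₁ 1, contDiff_infty.1 hu₁ 2, hρ₁per, hu₁per,
      fun z => hc₁.trans_le (hρ₁lb z), fun z hz => hmass₁ z.1 hz z.2,
      fun z hz => hmom₁ z.1 hz z.2⟩
    ⟨contDiff_infty.1 hρ₂ 1, contDiff_infty.1 hu₂ 2, hρ₂per, hu₂per,
      fun z => hc₂.trans_le (hρ₂lb z), fun z hz => hmass₂ z.1 hz z.2,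
      fun z hz => hmom₂ z.1 hz z.2⟩ hinit
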